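/- arXiv:math/0609591 — 2 statements merged into one kernel-verified Lean document; each statement's English description precedes it below -/
import Mathlib

section
/- Let m ≥ 3 be an integer. There is a constant C (depending on m) such that for every locally absolutely continuous z : (0,∞) → ℂ with ‖z‖_X < ∞ satisfying the orthogonality condition ∫₀^∞ z(ρ) h₁(ρ) ρ dρ = 0, one has ‖z‖_X ≤ C ‖L₀ z‖_{L²(ρ dρ)}. -/
open MeasureTheory Set Real Filter
open scoped ENNReal

noncomputable section

abbrev V3 := Fin 3 → ℝ
abbrev V2 := Fin 2 → ℝ

/-- cross product in ℝ³ -/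
def cross3 (a b : V3) : V3 :=
  ![a 1 * b 2 - a 2 * b 1, a 2 * b 0 - a 0 * b 2, a 0 * b 1 - a 1 * b 0]

/-- dot product in ℝ³ -/
def dot3 (a b : V3) : ℝ := a 0 * b 0 + a 1 * b 1 + a 2 * b 2

/-- squared euclidean norm in ℝ³ -/
def nsq3 (a : V3) : ℝ := a 0 ^ 2 + a 1 ^ 2 + a 2 ^ 2

/-- the generator R of rotations about the x₃-axis -/
def Rv (a : V3) : V3 := ![-a 1, a 0, 0]

/-- the rotation e^{αR} about the x₃-axis -/
def rotZ (α : ℝ) (a : V3) : V3 :=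
  ![Real.cos α * a 0 - Real.sin α * a 1, Real.sin α * a 0 + Real.cos α * a 1, a 2]

def kHat : V3 := ![0, 0, 1]
def negkHat : V3 := ![0, 0, -1]
def jHat : V3 := ![0, 1, 0]

/-- first component of the harmonic map profile -/
def h1f (m : ℕ) (r : ℝ) : ℝ := 2 / (r ^ (m : ℤ) + r ^ (-(m : ℤ)))

/-- third component of the harmonic map profile -/
def h3f (m : ℕ) (r : ℝ) : ℝ := (r ^ (m : ℤ) - r ^ (-(m : ℤ))) / (r ^ (m : ℤ) + r ^ (-(m : ℤ)))

/-- the harmonic map profile h -/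
def hProf (m : ℕ) (r : ℝ) : V3 := ![h1f m r, 0, h3f m r]

/-- the r-derivative of the harmonic map profile -/
def dhProf (m : ℕ) (r : ℝ) : V3 :=
  ![-((m : ℝ) / r) * h1f m r * h3f m r, 0, ((m : ℝ) / r) * (h1f m r) ^ 2]

/-- profile of the harmonic map e^{(mθ+α)R} h(r/s) -/
def harmP (m : ℕ) (s α : ℝ) (r : ℝ) : V3 := rotZ α (hProf m (r / s))

/-- its r-derivative -/
def dharmP (m : ℕ) (s α : ℝ) (r : ℝ) : V3 := fun i => (1 / s) * rotZ α (dhProf m (r / s)) i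

/-- `v` is locally absolutely continuous on (0,∞), with a.e. derivative `dv`. -/
def LocAC (v dv : ℝ → V3) : Prop :=
  (∀ a b : ℝ, 0 < a → a ≤ b → ∀ i, IntervalIntegrable (fun r => dv r i) volume a b) ∧
  (∀ a b : ℝ, 0 < a → a ≤ b → ∀ i, v b i - v a i = ∫ r in a..b, dv r i)

/-- energy density (w.r.t. dr) of the m-equivariant map with profile (v,dv) -/
def eDen (m : ℕ) (v dv : ℝ → V3) (r : ℝ) : ℝ :=
  (nsq3 (dv r) + ((m : ℝ) ^ 2 / r ^ 2) * ((v r 0) ^ 2 + (v r 1) ^ 2)) * r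

/-- the energy E(u) = (1/2)∫|∇u|² of the m-equivariant map with profile (v,dv) -/
def energy (m : ℕ) (v dv : ℝ → V3) : ℝ := π * ∫ r in Ioi (0:ℝ), eDen m v dv r

/-- membership in the class Σ_m, expressed in terms of the profile (v,dv) -/
def InSigma (m : ℕ) (v dv : ℝ → V3) : Prop :=
  LocAC v dv ∧ (∀ r ∈ Ioi (0:ℝ), nsq3 (v r) = 1) ∧
  IntegrableOn (eDen m v dv) (Ioi (0:ℝ)) ∧
  Tendsto v (nhdsWithin 0 (Ioi 0)) (nhds negkHat) ∧
  Tendsto v atTop (nhds kHat)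

/-- squared Ḣ¹(ℝ²) distance between the m-equivariant maps with profiles (v,dv), (w,dw) -/
def dH1sq (m : ℕ) (v dv w dw : ℝ → V3) : ℝ :=
  2 * π * ∫ r in Ioi (0:ℝ),
    (nsq3 (fun i => dv r i - dw r i)
      + ((m : ℝ) ^ 2 / r ^ 2) * ((v r 0 - w r 0) ^ 2 + (v r 1 - w r 1) ^ 2)) * r

/-- Ḣ¹(ℝ²) distance -/
def dH1 (m : ℕ) (v dv w dw : ℝ → V3) : ℝ := Real.sqrt (dH1sq m v dv w dw)

/-- the polar angle of a point of ℝ² -/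
def angleOf (x : V2) : ℝ := Complex.arg ⟨x 0, x 1⟩

/-- the radius of a point of ℝ² -/
def radOf (x : V2) : ℝ := Real.sqrt ((x 0) ^ 2 + (x 1) ^ 2)

/-- the m-equivariant map u(r,θ) = e^{mθR} v(r) -/
def eqMap (m : ℕ) (v : ℝ → V3) (x : V2) : V3 := rotZ ((m : ℝ) * angleOf x) (v (radOf x))

/-- the spatial gradient ∂_j u of the m-equivariant map with profile (v,dv) -/
def eqGrad (m : ℕ) (v dv : ℝ → V3) (x : V2) (j : Fin 2) : V3 :=
  rotZ ((m : ℝ) * angleOf x) (fun i =>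
    (x j / radOf x) * dv (radOf x) i
      + ((m : ℝ) * (if j = 0 then -(x 1) else x 0) / radOf x ^ 2) * Rv (v (radOf x)) i)

/-- weak (distributional) form of the Schrödinger map equation ∂ₜu = u × Δu on the time
interval I, for the m-equivariant map with time-dependent profile (v,dv):
∫∫ { u·φ_t - Σ_j (u × ∂_j u)·∂_j φ } dx dt = 0 for all C¹ compactly supported φ. -/
def WeakSM (m : ℕ) (I : Set ℝ) (v dv : ℝ → ℝ → V3) : Prop :=
  ∀ φ : ℝ → V2 → V3,
    (∀ i, ContDiff ℝ 1 (fun q : ℝ × V2 => φ q.1 q.2 i)) →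
    (∀ i, HasCompactSupport (fun q : ℝ × V2 => φ q.1 q.2 i)) →
    (∀ t, t ∉ interior I → ∀ x, φ t x = 0) →
    (∫ t in I, ∫ x : V2,
      (dot3 (eqMap m (v t) x) (fun i => deriv (fun τ => φ τ x i) t)
        - ∑ j : Fin 2, dot3 (cross3 (eqMap m (v t) x) (eqGrad m (v t) (dv t) x j))
            (fun i => fderiv ℝ (fun y => φ t y i) x (Pi.single j 1)))) = 0

/-- continuity in t of the map t ↦ u(t) with respect to the Ḣ¹ distance, on I -/
def H1Cont (m : ℕ) (I : Set ℝ) (v dv : ℝ → ℝ → V3) : Prop :=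
  ∀ t₀ ∈ I, ∀ ε > (0:ℝ), ∃ η > (0:ℝ), ∀ t ∈ I, |t - t₀| < η →
    dH1 m (v t) (dv t) (v t₀) (dv t₀) < ε

/-- a weak solution of the Schrödinger map equation in the class C(I; Σ_m), with
initial profile v₀ -/
def SolClass (m : ℕ) (I : Set ℝ) (v dv : ℝ → ℝ → V3) (v₀ : ℝ → V3) : Prop :=
  (∀ r ∈ Ioi (0:ℝ), v 0 r = v₀ r) ∧ WeakSM m I v dv ∧
  (∀ t ∈ I, InSigma m (v t) (dv t)) ∧ H1Cont m I v dv

/-- the profile of Δu for the m-equivariant map u with profile (v,dv,ddv):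
Δu = e^{mθR}( v_rr + v_r/r + (m²/r²) R² v ) -/
def lapP (m : ℕ) (v dv ddv : ℝ → V3) (r : ℝ) : V3 := fun i =>
  ddv r i + dv r i / r + ((m : ℝ) ^ 2 / r ^ 2) * (![-(v r 0), -(v r 1), 0] : V3) i

/-- squared Ḣ² distance (via the Laplacian) -/
def dH2sq (m : ℕ) (v dv ddv w dw ddw : ℝ → V3) : ℝ :=
  2 * π * ∫ r in Ioi (0:ℝ), nsq3 (fun i => lapP m v dv ddv r i - lapP m w dw ddw r i) * r


/-- `z` is locally absolutely continuous on (0,∞), with a.e. derivative `dz`. -/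
def LocACC (z dz : ℝ → ℂ) : Prop :=
  (∀ a b : ℝ, 0 < a → a ≤ b → IntervalIntegrable dz volume a b) ∧
  (∀ a b : ℝ, 0 < a → a ≤ b → z b - z a = ∫ ρ in a..b, dz ρ)

/-- the density (w.r.t. dρ) of the squared X-norm: (|z'|² + |z|²/ρ²) ρ -/
def xDen (z dz : ℝ → ℂ) (ρ : ℝ) : ℝ := (‖dz ρ‖ ^ 2 + ‖z ρ‖ ^ 2 / ρ ^ 2) * ρ

/-- the X-norm ‖z‖_X = (∫ (|z'|² + |z|²/ρ²) ρ dρ)^{1/2} -/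
def normX (z dz : ℝ → ℂ) : ℝ := Real.sqrt (∫ ρ in Ioi (0:ℝ), xDen z dz ρ)

/-- the operator L₀ = ∂_ρ + (m/ρ) h₃(ρ) -/
def L0op (m : ℕ) (z dz : ℝ → ℂ) (ρ : ℝ) : ℂ :=
  dz ρ + ((((m : ℝ) / ρ) * h3f m ρ : ℝ) : ℂ) * z ρ

lemma h1f_eq (m : ℕ) {r : ℝ} (hr : 0 < r) : h1f m r = 2 * r ^ m / ((r ^ m) ^ 2 + 1) := by
  have hp : 0 < r ^ m := pow_pos hr m
  simp only [h1f, zpow_neg, zpow_natCast]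
  field_simp

lemma h3f_eq (m : ℕ) {r : ℝ} (hr : 0 < r) :
    h3f m r = ((r ^ m) ^ 2 - 1) / ((r ^ m) ^ 2 + 1) := by
  have hp : 0 < r ^ m := pow_pos hr m
  simp only [h3f, zpow_neg, zpow_natCast]
  field_simp

lemma h1f_one (m : ℕ) : h1f m 1 = 1 := by
  simp [h1f]; norm_num

lemma h1f_pos (m : ℕ) {r : ℝ} (hr : 0 < r) : 0 < h1f m r := by
  rw [h1f_eq m hr]; positivity

lemma h3f_sq_le_one (m : ℕ) {r : ℝ} (hr : 0 < r) : h3f m r ^ 2 ≤ 1 := by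
  rw [h3f_eq m hr, div_pow, div_le_one (by positivity)]
  nlinarith [sq_nonneg (r ^ m)]

lemma hasDerivAt_pow_nat (m : ℕ) {r : ℝ} (hr : 0 < r) :
    HasDerivAt (fun x : ℝ => x ^ m) ((m : ℝ) / r * r ^ m) r := by
  convert! hasDerivAt_pow m r using 1
  rcases m with _ | n
  · simp
  · simp only [Nat.add_sub_cancel, pow_succ]
    field_simp

lemma hasDerivAt_h1f (m : ℕ) {r : ℝ} (hr : 0 < r) :
    HasDerivAt (h1f m) (-((m : ℝ) / r * h3f m r * h1f m r)) r := by
  have hp := hasDerivAt_pow_nat m hr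
  have hq : HasDerivAt (fun x : ℝ => 2 * x ^ m / ((x ^ m) ^ 2 + 1)) _ r :=
    (hp.const_mul 2).div ((hp.pow 2).add_const 1) (by positivity)
  refine (hq.congr_of_eventuallyEq ?_).congr_deriv ?_
  · filter_upwards [Ioi_mem_nhds hr] with x hx using h1f_eq m hx
  · rw [h1f_eq m hr, h3f_eq m hr]
    field_simp
    push_cast
    ring

lemma continuousOn_h1f (m : ℕ) : ContinuousOn (h1f m) (Ioi 0) := fun _ hx =>
  (hasDerivAt_h1f m hx).continuousAt.continuousWithinAt

lemma continuousOn_h3f (m : ℕ) : ContinuousOn (h3f m) (Ioi 0) := by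
  have : ContinuousOn (fun r : ℝ => ((r ^ m) ^ 2 - 1) / ((r ^ m) ^ 2 + 1)) (Ioi 0) := by
    refine ContinuousOn.div (by fun_prop) (by fun_prop) fun x _ => by positivity
  exact this.congr fun x hx => h3f_eq m hx

lemma integrableOn_h1f_weight {m : ℕ} (hm : 3 ≤ m) :
    IntegrableOn (fun r => h1f m r ^ 2 * (r ^ 3 + 1 / r)) (Ioi 0) := by
  have hc : ContinuousOn (fun r => h1f m r ^ 2 * (r ^ 3 + 1 / r)) (Ioi 0) := by
    refine ((continuousOn_h1f m).pow 2).mul (ContinuousOn.add (by fun_prop) ?_)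
    exact continuousOn_const.div continuousOn_id fun x hx => ne_of_gt hx
  rw [← Ioc_union_Ioi_eq_Ioi (zero_le_one' ℝ)]
  refine IntegrableOn.union ?_ ?_
  · have hcst : IntegrableOn (fun _ : ℝ => (8 : ℝ)) (Ioc 0 1) := by simp
    refine Integrable.mono' hcst ((hc.mono Ioc_subset_Ioi_self).aestronglyMeasurable
      measurableSet_Ioc) ?_
    filter_upwards [ae_restrict_mem measurableSet_Ioc] with r ⟨hr0, hr1⟩
    have hp : 0 < r ^ m := pow_pos hr0 m
    have hpr : r ^ m ≤ r := pow_le_of_le_one hr0.le hr1 (by omega)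
    have hh : h1f m r ≤ 2 * r := by
      rw [h1f_eq m hr0, div_le_iff₀ (by positivity)]
      nlinarith [mul_pos hr0 (pow_pos hp 2)]
    have hh0 := h1f_pos m hr0
    rw [Real.norm_of_nonneg (by positivity)]
    calc h1f m r ^ 2 * (r ^ 3 + 1 / r) ≤ (2 * r) ^ 2 * (r ^ 3 + 1 / r) := by gcongr
      _ = 4 * r ^ 5 + 4 * r := by field_simp; ring
      _ ≤ 8 := by linarith [pow_le_one₀ (n := 5) hr0.le hr1]
  · have hcst : IntegrableOn (fun r : ℝ => 8 * r ^ (-2 : ℝ)) (Ioi 1) :=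
      (integrableOn_Ioi_rpow_of_lt (by norm_num) one_pos).const_mul 8
    refine Integrable.mono' hcst ((hc.mono (Ioi_subset_Ioi zero_le_one)).aestronglyMeasurable
      measurableSet_Ioi) ?_
    filter_upwards [ae_restrict_mem measurableSet_Ioi] with r (hr : 1 < r)
    have hr0 : 0 < r := by linarith
    have hp : 0 < r ^ m := pow_pos hr0 m
    have hpr : r ^ 3 ≤ r ^ m := pow_le_pow_right₀ hr.le hm
    have hh : h1f m r ≤ 2 / r ^ 3 := by
      rw [h1f_eq m hr0, div_le_div_iff₀ (by positivity) (by positivity)]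
      nlinarith
    have hh0 := h1f_pos m hr0
    rw [Real.norm_of_nonneg (by positivity), Real.rpow_neg hr0.le]
    norm_cast
    calc h1f m r ^ 2 * (r ^ 3 + 1 / r) ≤ (2 / r ^ 3) ^ 2 * (r ^ 3 + 1 / r) := by gcongr
      _ = 4 * (r ^ 4 + 1) / r ^ 7 := by field_simp; norm_num
      _ ≤ 8 * (r ^ 2)⁻¹ := by
        rw [← div_eq_mul_inv, div_le_div_iff₀ (by positivity) (by positivity)]
        have h4 : 1 ≤ r ^ 4 := one_le_pow₀ hr.le
        have h6 : r ^ 6 ≤ r ^ 7 := pow_le_pow_right₀ hr.le (by norm_num)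
        have h2 : r ^ 2 ≤ r ^ 7 := pow_le_pow_right₀ hr.le (by norm_num)
        nlinarith

/-- `u` is real-valued and locally absolutely continuous on `(0,∞)`, with a.e. derivative `du`. -/
structure LocACR (u du : ℝ → ℝ) : Prop where
  intervalIntegrable : ∀ a b : ℝ, 0 < a → a ≤ b → IntervalIntegrable du volume a b
  sub_eq : ∀ a b : ℝ, 0 < a → a ≤ b → u b - u a = ∫ x in a..b, du x

lemma absolutelyContinuous_of_sub_eq {u du : ℝ → ℝ} {a b : ℝ}
    (hi : IntervalIntegrable du volume a b) (hab : a ≤ b)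
    (hd : ∀ x ∈ Icc a b, u x - u a = ∫ t in a..x, du t) :
    AbsolutelyContinuousOnInterval u a b := by
  have h := hi.absolutelyContinuousOnInterval_intervalIntegral (c := a) left_mem_uIcc
  rw [absolutelyContinuousOnInterval_iff] at h ⊢
  intro ε hε
  obtain ⟨δ, hδ, H⟩ := h ε hε
  refine ⟨δ, hδ, fun E hE hlt => ?_⟩
  convert! H E hE hlt using 1
  refine Finset.sum_congr rfl fun i hi => ?_
  have h1 := hE.1 i hi
  rw [uIcc_of_le hab] at h1
  rw [Real.dist_eq, Real.dist_eq, ← hd _ h1.1, ← hd _ h1.2]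
  congr 1; ring

lemma LocACR.continuousOn {u du : ℝ → ℝ} (hu : LocACR u du) : ContinuousOn u (Ioi 0) := by
  intro x (hx : 0 < x)
  have h : x / 2 ≤ 2 * x := by linarith
  have hac := absolutelyContinuous_of_sub_eq (hu.intervalIntegrable (x / 2) (2 * x) (by linarith) h)
    h fun y hy => hu.sub_eq _ _ (by linarith) hy.1
  have hc := hac.continuousOn
  rw [uIcc_of_le h] at hc
  exact (hc.continuousAt (Icc_mem_nhds (by linarith) (by linarith))).continuousWithinAt

lemma aecover_Ioc_one_div_nat : AECover (volume.restrict (Ioi (0 : ℝ))) atTop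
    (fun n : ℕ => Ioc (1 / ((n : ℝ) + 1)) ((n : ℝ) + 1)) := by
  simp_rw [← Ioi_inter_Iic]
  exact (aecover_Ioi_of_Ioi tendsto_one_div_add_atTop_nhds_zero_nat).inter
    (aecover_Iic (tendsto_atTop_add_const_right _ _ tendsto_natCast_atTop_atTop))

lemma LocACR.aestronglyMeasurable {u du : ℝ → ℝ} (hu : LocACR u du) :
    AEStronglyMeasurable du (volume.restrict (Ioi 0)) := by
  refine aecover_Ioc_one_div_nat.aestronglyMeasurable fun n => ?_
  have hn : (1 : ℝ) ≤ n + 1 := by linarith [n.cast_nonneg (α := ℝ)]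
  have ha : 0 < 1 / ((n : ℝ) + 1) := by positivity
  have ha1 : 1 / ((n : ℝ) + 1) ≤ 1 := by rw [div_le_one (by positivity)]; exact hn
  have hsub : Ioc (1 / ((n : ℝ) + 1)) ((n : ℝ) + 1) ⊆ Ioi 0 := fun x hx => ha.trans hx.1
  rw [Measure.restrict_restrict measurableSet_Ioc,
    inter_eq_left.2 hsub]
  exact ((intervalIntegrable_iff_integrableOn_Ioc_of_le (ha1.trans hn)).1
    (hu.intervalIntegrable _ _ ha (ha1.trans hn))).aestronglyMeasurable

lemma ae_hasDerivAt_of_sub_eq {u du : ℝ → ℝ} {a b : ℝ}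
    (hi : IntervalIntegrable du volume a b) (hab : a ≤ b)
    (hd : ∀ x ∈ Icc a b, u x - u a = ∫ t in a..x, du t) :
    ∀ᵐ x, x ∈ Ioo a b → HasDerivAt u (du x) x := by
  filter_upwards [hi.ae_hasDerivAt_integral] with x hx hxab
  have h := hx (by rw [uIcc_of_le hab]; exact Ioo_subset_Icc_self hxab) a left_mem_uIcc
  refine (h.const_add (u a)).congr_of_eventuallyEq ?_
  filter_upwards [Ioo_mem_nhds hxab.1 hxab.2] with y hy
  rw [← hd y (Ioo_subset_Icc_self hy)]; ring

lemma ae_mem_Ioo_of_Ioc (a b : ℝ) : ∀ᵐ x : ℝ, x ∈ Ioc a b → x ∈ Ioo a b := by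
  have : ∀ᵐ x : ℝ, x ≠ b := by simp [ae_iff, measure_singleton]
  filter_upwards [this] with x hx hxab using ⟨hxab.1, lt_of_le_of_ne hxab.2 hx⟩

lemma weighted_sq_sub {u du φ φ' : ℝ → ℝ} {a b : ℝ} (hab : a ≤ b)
    (hi : IntervalIntegrable du volume a b)
    (hd : ∀ x ∈ Icc a b, u x - u a = ∫ t in a..x, du t)
    (hφ : ∀ x ∈ Icc a b, HasDerivAt φ (φ' x) x) (hφ' : ContinuousOn φ' (Icc a b)) :
    IntervalIntegrable (fun x => φ' x * u x ^ 2 + 2 * φ x * u x * du x) volume a b ∧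
      ∫ x in a..b, (φ' x * u x ^ 2 + 2 * φ x * u x * du x) =
        φ b * u b ^ 2 - φ a * u a ^ 2 := by
  have hφi : IntervalIntegrable φ' volume a b :=
    ContinuousOn.intervalIntegrable (by rwa [uIcc_of_le hab])
  have hφd : ∀ x ∈ Icc a b, φ x - φ a = ∫ t in a..x, φ' t := fun x hx => by
    rw [intervalIntegral.integral_eq_sub_of_hasDerivAt]
    · intro y hy
      rw [uIcc_of_le hx.1] at hy
      exact hφ y ⟨hy.1, hy.2.trans hx.2⟩
    · refine hφi.mono_set ?_
      rw [uIcc_of_le hx.1, uIcc_of_le hab]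
      exact Icc_subset_Icc_right hx.2
  have hac := absolutelyContinuous_of_sub_eq hi hab hd
  have hacφ := absolutelyContinuous_of_sub_eq hφi hab hφd
  have hg := hacφ.fun_mul (hac.fun_mul hac)
  have hae : ∀ᵐ x, x ∈ uIoc a b → deriv (fun x => φ x * (u x * u x)) x =
      φ' x * u x ^ 2 + 2 * φ x * u x * du x := by
    filter_upwards [ae_hasDerivAt_of_sub_eq hi hab hd, ae_mem_Ioo_of_Ioc a b] with x hx hxo hxab
    rw [uIoc_of_le hab] at hxab
    have hxo := hxo hxab
    rw [((hφ x (Ioo_subset_Icc_self hxo)).fun_mul ((hx hxo).fun_mul (hx hxo))).deriv]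
    ring
  constructor
  · refine hg.intervalIntegrable_deriv.congr_ae ?_
    exact (ae_restrict_iff' measurableSet_uIoc).2 hae
  · rw [← intervalIntegral.integral_congr_ae hae, hg.integral_deriv_eq_sub]
    ring

lemma hardy_pointwise {k ψ φ h u s : ℝ} (hk : 0 < k) (hφ : φ ^ 2 ≤ 4) (h1 : 1 ≤ 2 * φ * h + ψ) :
    k / 2 * u ^ 2 ≤ -(-(k * ψ) * u ^ 2 + 2 * φ * u * s) + 8 / k * (s + k * h * u) ^ 2 := by
  obtain ⟨f, rfl⟩ : ∃ f, s = f - k * h * u := ⟨s + k * h * u, by ring⟩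
  have e : -(-(k * ψ) * u ^ 2 + 2 * φ * u * (f - k * h * u))
      + 8 / k * (f - k * h * u + k * h * u) ^ 2 - k / 2 * u ^ 2
      = k * u ^ 2 * (2 * φ * h + ψ - 1)
        + ((k * u - 2 * φ * f) ^ 2 + (16 - 4 * φ ^ 2) * f ^ 2) / (2 * k) := by
    field_simp; ring
  have h2 : 0 ≤ k * u ^ 2 * (2 * φ * h + ψ - 1) :=
    mul_nonneg (by positivity) (by linarith)
  have h3 : 0 ≤ ((k * u - 2 * φ * f) ^ 2 + (16 - 4 * φ ^ 2) * f ^ 2) / (2 * k) :=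
    div_nonneg (add_nonneg (sq_nonneg _) (mul_nonneg (by linarith) (sq_nonneg _))) (by linarith)
  linarith

lemma hardy_interval {m : ℕ} (hm : 1 ≤ m) {u du φ ψ : ℝ → ℝ} {a b : ℝ} (ha : 0 < a) (hab : a ≤ b)
    (hu : LocACR u du)
    (hφ : ∀ x ∈ Icc a b, HasDerivAt φ (-((m : ℝ) / x * ψ x)) x)
    (hψ : ContinuousOn ψ (Icc a b))
    (hb : ∀ x ∈ Icc a b, φ x ^ 2 ≤ 4) (h1 : ∀ x ∈ Icc a b, 1 ≤ 2 * φ x * h3f m x + ψ x)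
    (hend : 0 ≤ φ b * u b ^ 2 - φ a * u a ^ 2)
    (hiu : IntervalIntegrable (fun x => u x ^ 2 / x) volume a b)
    (hif : IntervalIntegrable (fun x => (du x + m / x * h3f m x * u x) ^ 2 * x) volume a b) :
    ∫ x in a..b, u x ^ 2 / x ≤ 16 * ∫ x in a..b, (du x + m / x * h3f m x * u x) ^ 2 * x := by
  have hm0 : (1 : ℝ) ≤ m := by exact_mod_cast hm
  have hpos : ∀ x ∈ Icc a b, 0 < x := fun x hx => ha.trans_le hx.1
  obtain ⟨hgi, hge⟩ := weighted_sq_sub hab (hu.intervalIntegrable a b ha hab)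
    (fun x hx => hu.sub_eq a x ha hx.1) hφ
    ((continuousOn_const.div continuousOn_id fun x hx => (hpos x hx).ne').mul hψ).neg
  have hgn : IntervalIntegrable
      (fun x => -(-((m : ℝ) / x * ψ x) * u x ^ 2 + 2 * φ x * u x * du x)) volume a b := hgi.neg
  have key : ∫ x in a..b, m / 2 * (u x ^ 2 / x) ≤
      ∫ x in a..b, (-(-((m : ℝ) / x * ψ x) * u x ^ 2 + 2 * φ x * u x * du x)
        + 8 / m * ((du x + m / x * h3f m x * u x) ^ 2 * x)) := by
    refine intervalIntegral.integral_mono_on hab (hiu.const_mul _)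
      (hgn.add (hif.const_mul _)) fun x hx => ?_
    have hx0 := hpos x hx
    have := hardy_pointwise (u := u x) (s := du x) (k := m / x) (by positivity) (hb x hx) (h1 x hx)
    convert! this using 1
    · ring
    · field_simp
  rw [intervalIntegral.integral_add hgn (hif.const_mul _), intervalIntegral.integral_neg, hge,
    intervalIntegral.integral_const_mul, intervalIntegral.integral_const_mul] at key
  set F := ∫ x in a..b, (du x + m / x * h3f m x * u x) ^ 2 * x
  have hF : 0 ≤ F := intervalIntegral.integral_nonneg hab fun x hx =>
    mul_nonneg (sq_nonneg _) (hpos x hx).le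
  have h2 : m / 2 * ∫ x in a..b, u x ^ 2 / x ≤ 8 / m * F := by linarith
  have h3 : 8 / (m : ℝ) * F ≤ m / 2 * (16 * F) := by
    rw [div_mul_eq_mul_div, div_le_iff₀ (by positivity)]
    nlinarith [mul_le_mul hm0 hm0 (by norm_num) (by positivity)]
  exact le_of_mul_le_mul_left (h2.trans h3) (by positivity)

/-- Coercivity of `L₀` in the weighted `L²` norm on functions vanishing at `1`. -/
lemma hardy_of_eq_zero {m : ℕ} (hm : 1 ≤ m) {u du : ℝ → ℝ} (hu : LocACR u du) (hu1 : u 1 = 0)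
    (hiu : IntegrableOn (fun x => u x ^ 2 / x) (Ioi 0))
    (hif : IntegrableOn (fun x => (du x + m / x * h3f m x * u x) ^ 2 * x) (Ioi 0)) :
    ∫ x in Ioi 0, u x ^ 2 / x ≤ 16 * ∫ x in Ioi 0, (du x + m / x * h3f m x * u x) ^ 2 * x := by
  have restr {F : ℝ → ℝ} (hF : IntegrableOn F (Ioi 0)) {a b : ℝ} (ha : 0 < a) (hab : a ≤ b) :
      IntervalIntegrable F volume a b :=
    (intervalIntegrable_iff_integrableOn_Ioc_of_le hab).2
      (hF.mono_set fun x (hx : x ∈ Ioc a b) => ha.trans hx.1)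
  have right {b : ℝ} (hb : 1 ≤ b) : ∫ x in 1..b, u x ^ 2 / x ≤
      16 * ∫ x in 1..b, (du x + m / x * h3f m x * u x) ^ 2 * x := by
    refine hardy_interval hm (φ := fun x => 1 + (x ^ m)⁻¹) (ψ := fun x => (x ^ m)⁻¹) one_pos hb hu
      (fun x hx => ?_) ?_ (fun x hx => ?_) (fun x hx => ?_) ?_
      (restr hiu one_pos hb) (restr hif one_pos hb)
    · have hx0 : 0 < x := one_pos.trans_le hx.1
      refine (((hasDerivAt_pow_nat m hx0).fun_inv (by positivity)).const_add 1).congr_deriv ?_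
      field_simp
    · exact ContinuousOn.inv₀ (by fun_prop) fun x (hx : x ∈ Icc 1 b) => by
        have hx0 : 0 < x := one_pos.trans_le hx.1
        positivity
    · have hp : 1 ≤ x ^ m := one_le_pow₀ hx.1
      have : (x ^ m)⁻¹ ≤ 1 := inv_le_one_of_one_le₀ hp
      have : 0 < (x ^ m)⁻¹ := by positivity
      nlinarith
    · have hp : 1 ≤ x ^ m := one_le_pow₀ hx.1
      rw [h3f_eq m (one_pos.trans_le hx.1)]
      generalize x ^ m = p at *
      have e : 2 * (1 + p⁻¹) * ((p ^ 2 - 1) / (p ^ 2 + 1)) + p⁻¹ - 1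
          = (p - 1) * ((p + 1) ^ 2 + 2 * p) / (p * (p ^ 2 + 1)) := by
        field_simp; ring
      have : 0 ≤ (p - 1) * ((p + 1) ^ 2 + 2 * p) / (p * (p ^ 2 + 1)) := by
        have : 0 ≤ p - 1 := by linarith
        positivity
      linarith
    · have : 0 ≤ b := by linarith
      simp only [hu1]
      have : 0 ≤ (1 + (b ^ m)⁻¹) * u b ^ 2 := by positivity
      linarith
  have left {a : ℝ} (ha : 0 < a) (ha1 : a ≤ 1) : ∫ x in a..1, u x ^ 2 / x ≤
      16 * ∫ x in a..1, (du x + m / x * h3f m x * u x) ^ 2 * x := by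
    refine hardy_interval hm (φ := fun x => -(1 + x ^ m)) (ψ := fun x => x ^ m) ha ha1 hu
      (fun x hx => ?_) (by fun_prop) (fun x hx => ?_) (fun x hx => ?_) ?_
      (restr hiu ha ha1) (restr hif ha ha1)
    · exact ((hasDerivAt_pow_nat m (ha.trans_le hx.1)).const_add 1).neg
    · have hx0 : 0 < x := ha.trans_le hx.1
      have hp : x ^ m ≤ 1 := pow_le_one₀ hx0.le hx.2
      have : 0 < x ^ m := by positivity
      nlinarith
    · have hx0 : 0 < x := ha.trans_le hx.1
      have hp : x ^ m ≤ 1 := pow_le_one₀ hx0.le hx.2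
      have hp0 : 0 < x ^ m := by positivity
      rw [h3f_eq m hx0]
      generalize x ^ m = p at *
      have e : 2 * -(1 + p) * ((p ^ 2 - 1) / (p ^ 2 + 1)) + p - 1
          = (1 - p) * ((p + 1) ^ 2 + 2 * p) / (p ^ 2 + 1) := by
        field_simp; ring
      have : 0 ≤ (1 - p) * ((p + 1) ^ 2 + 2 * p) / (p ^ 2 + 1) := by
        have : 0 ≤ 1 - p := by linarith
        positivity
      linarith
    · simp only [hu1]
      have : 0 ≤ (1 + a ^ m) * u a ^ 2 := by positivity
      linarith
  refine le_of_tendsto' (aecover_Ioc_one_div_nat.integral_tendsto_of_countably_generated hiu) fun n => ?_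
  have hn : (1 : ℝ) ≤ n + 1 := by linarith [n.cast_nonneg (α := ℝ)]
  have ha : 0 < 1 / ((n : ℝ) + 1) := by positivity
  have ha1 : 1 / ((n : ℝ) + 1) ≤ 1 := by rw [div_le_one (by positivity)]; exact hn
  have hsub : Ioc (1 / ((n : ℝ) + 1)) ((n : ℝ) + 1) ⊆ Ioi 0 := fun x hx => ha.trans hx.1
  rw [Measure.restrict_restrict measurableSet_Ioc, inter_eq_left.2 hsub,
    ← intervalIntegral.integral_of_le (ha1.trans hn),
    ← intervalIntegral.integral_add_adjacent_intervals (restr hiu ha ha1) (restr hiu one_pos hn)]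
  refine (add_le_add (left ha ha1) (right hn)).trans ?_
  rw [← mul_add, intervalIntegral.integral_add_adjacent_intervals (restr hif ha ha1)
    (restr hif one_pos hn), intervalIntegral.integral_of_le (ha1.trans hn)]
  refine mul_le_mul_of_nonneg_left (setIntegral_mono_set hif ?_ hsub.eventuallyLE) (by norm_num)
  filter_upwards [ae_restrict_mem measurableSet_Ioi] with x hx
  exact mul_nonneg (sq_nonneg _) (le_of_lt hx)

lemma LocACR.sub_const_mul_h1f {z dz : ℝ → ℝ} (hz : LocACR z dz) (m : ℕ) (c : ℝ) :
    LocACR (fun x => z x - c * h1f m x) (fun x => dz x + c * (m / x * h3f m x * h1f m x)) := by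
  have hint {a b : ℝ} (ha : 0 < a) (hab : a ≤ b) :
      IntervalIntegrable (fun x => -((m : ℝ) / x * h3f m x * h1f m x)) volume a b := by
    have hsub : uIcc a b ⊆ Ioi 0 := by
      rw [uIcc_of_le hab]
      exact fun x hx => ha.trans_le hx.1
    exact ((((continuousOn_const.div continuousOn_id fun x hx => (ne_of_gt (hsub hx))).mul
      ((continuousOn_h3f m).mono hsub)).mul ((continuousOn_h1f m).mono hsub)).neg).intervalIntegrable
  have hfun : (fun x => dz x + c * (m / x * h3f m x * h1f m x)) =
      fun x => dz x - c * (-((m : ℝ) / x * h3f m x * h1f m x)) := by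
    ext x; ring
  rw [hfun]
  refine ⟨fun a b ha hab => (hz.intervalIntegrable a b ha hab).sub ((hint ha hab).const_mul c),
    fun a b ha hab => ?_⟩
  rw [intervalIntegral.integral_sub (hz.intervalIntegrable a b ha hab) ((hint ha hab).const_mul c),
    intervalIntegral.integral_const_mul, ← hz.sub_eq a b ha hab,
    intervalIntegral.integral_eq_sub_of_hasDerivAt (f := h1f m) _ (hint ha hab)]
  · ring
  · intro x hx
    rw [uIcc_of_le hab] at hx
    exact hasDerivAt_h1f m (ha.trans_le hx.1)

lemma integrableOn_h1f_sq_div {m : ℕ} (hm : 3 ≤ m) :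
    IntegrableOn (fun r => h1f m r ^ 2 / r) (Ioi 0) := by
  refine (integrableOn_h1f_weight hm).mono' ?_ ?_
  · exact (((continuousOn_h1f m).pow 2).div continuousOn_id
      fun x hx => ne_of_gt hx).aestronglyMeasurable measurableSet_Ioi
  · filter_upwards [ae_restrict_mem measurableSet_Ioi] with r (hr : 0 < r)
    rw [Real.norm_of_nonneg (by positivity), mul_add, mul_one_div]
    linarith [show 0 ≤ h1f m r ^ 2 * r ^ 3 by positivity]

lemma mul_h1f_le_weight (m : ℕ) {r : ℝ} (hr : 0 < r) :
    h1f m r ^ 2 * r ≤ h1f m r ^ 2 * (r ^ 3 + 1 / r) := by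
  refine mul_le_mul_of_nonneg_left ?_ (sq_nonneg _)
  rw [← sub_nonneg]
  have : r ^ 3 + 1 / r - r = ((r ^ 2 - 1) ^ 2 + r ^ 2) / r := by field_simp; ring
  rw [this]; positivity

lemma integrableOn_h1f_sq_mul {m : ℕ} (hm : 3 ≤ m) :
    IntegrableOn (fun r => h1f m r ^ 2 * r) (Ioi 0) := by
  refine (integrableOn_h1f_weight hm).mono' ?_ ?_
  · exact (((continuousOn_h1f m).pow 2).mul continuousOn_id).aestronglyMeasurable measurableSet_Ioi
  · filter_upwards [ae_restrict_mem measurableSet_Ioi] with r (hr : 0 < r)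
    rw [Real.norm_of_nonneg (by positivity)]
    exact mul_h1f_le_weight m hr

lemma integral_h1f_sq_mul_pos {m : ℕ} (hm : 3 ≤ m) : 0 < ∫ r in Ioi 0, h1f m r ^ 2 * r := by
  rw [setIntegral_pos_iff_support_of_nonneg_ae _ (integrableOn_h1f_sq_mul hm)]
  · have : Ioi (0 : ℝ) ⊆ Function.support (fun r => h1f m r ^ 2 * r) := fun r (hr : 0 < r) =>
      (mul_pos (pow_pos (h1f_pos m hr) 2) hr).ne'
    rw [inter_eq_right.2 this]
    simp
  · filter_upwards [ae_restrict_mem measurableSet_Ioi] with r (hr : 0 < r)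
    exact mul_nonneg (sq_nonneg _) hr.le

/-- Coercivity of `L₀` in the weighted `L²` norm under orthogonality to `h₁`, real case. -/
lemma exists_real_coercivity {m : ℕ} (hm : 3 ≤ m) :
    ∃ K > (0 : ℝ), ∀ z dz : ℝ → ℝ, LocACR z dz →
      IntegrableOn (fun x => z x ^ 2 / x) (Ioi 0) →
      IntegrableOn (fun x => (dz x + m / x * h3f m x * z x) ^ 2 * x) (Ioi 0) →
      IntegrableOn (fun x => z x * (h1f m x * x)) (Ioi 0) →
      ∫ x in Ioi 0, z x * (h1f m x * x) = 0 →
      ∫ x in Ioi 0, z x ^ 2 / x ≤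
        K * ∫ x in Ioi 0, (dz x + m / x * h3f m x * z x) ^ 2 * x := by
  set N := ∫ r in Ioi 0, h1f m r ^ 2 * r
  set G := ∫ r in Ioi 0, h1f m r ^ 2 * (r ^ 3 + 1 / r)
  have hN0 : 0 < N := integral_h1f_sq_mul_pos hm
  have hNG : N ≤ G := setIntegral_mono_on (integrableOn_h1f_sq_mul hm)
    (integrableOn_h1f_weight hm) measurableSet_Ioi fun r hr => mul_h1f_le_weight m hr
  have hG0 : 0 < G := hN0.trans_le hNG
  refine ⟨32 * (1 + G ^ 2 / N ^ 2), by positivity, fun z dz hz hiz hif hio ho => ?_⟩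
  set c := z 1
  have hu := hz.sub_const_mul_h1f m c
  set u : ℝ → ℝ := fun x => z x - c * h1f m x with hudef
  have hLu : (fun x => (dz x + c * (m / x * h3f m x * h1f m x) + m / x * h3f m x * u x) ^ 2 * x) =
      fun x => (dz x + m / x * h3f m x * z x) ^ 2 * x := by
    ext x; simp only [hudef]; ring
  have hdiv := integrableOn_h1f_sq_div hm
  have hiu : IntegrableOn (fun x => u x ^ 2 / x) (Ioi 0) := by
    have hcz : ContinuousOn u (Ioi 0) := hu.continuousOn
    refine ((hiz.const_mul 2).add (hdiv.const_mul (2 * c ^ 2))).mono'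
      (((hcz.pow 2).div continuousOn_id fun x hx => ne_of_gt hx).aestronglyMeasurable
        measurableSet_Ioi) ?_
    filter_upwards [ae_restrict_mem measurableSet_Ioi] with r (hr : 0 < r)
    rw [Real.norm_of_nonneg (by positivity)]
    simp only [Pi.add_apply, hudef]
    rw [← mul_div_assoc, ← mul_div_assoc, ← add_div]
    gcongr
    nlinarith [sq_nonneg (z r + c * h1f m r)]
  have hY := hardy_of_eq_zero (m := m) (by omega) hu (by simp [hudef, h1f_one, c]) hiu (by rw [hLu]; exact hif)
  rw [hLu] at hY
  set F := ∫ x in Ioi 0, (dz x + m / x * h3f m x * z x) ^ 2 * x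
  set Y := ∫ x in Ioi 0, u x ^ 2 / x
  have hcN : c ^ 2 * N ≤ N / (2 * G) * c ^ 2 * G + G / (2 * N) * Y := by
    have e : ∫ x in Ioi 0, (c ^ 2 * (h1f m x ^ 2 * x) - c * (z x * (h1f m x * x))) =
        c ^ 2 * N := by
      rw [integral_sub ((integrableOn_h1f_sq_mul hm).const_mul _) (hio.const_mul _),
        integral_const_mul, integral_const_mul, ho, mul_zero, sub_zero]
    have e' : ∫ x in Ioi 0, (N / (2 * G) * c ^ 2 * (h1f m x ^ 2 * (x ^ 3 + 1 / x))
        + G / (2 * N) * (u x ^ 2 / x)) = N / (2 * G) * c ^ 2 * G + G / (2 * N) * Y := by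
      rw [integral_add ((integrableOn_h1f_weight hm).const_mul _) (hiu.const_mul _),
        integral_const_mul, integral_const_mul]
    rw [← e, ← e']
    refine setIntegral_mono_on
      (((integrableOn_h1f_sq_mul hm).const_mul _).sub (hio.const_mul _))
      (((integrableOn_h1f_weight hm).const_mul _).add (hiu.const_mul _)) measurableSet_Ioi
      fun x (hx : 0 < x) => ?_
    have e1 : c ^ 2 * (h1f m x ^ 2 * x) - c * (z x * (h1f m x * x)) =
        -(c * u x * h1f m x * x) := by simp only [hudef]; ring
    have e2 : N / (2 * G) * c ^ 2 * (h1f m x ^ 2 * (x ^ 3 + 1 / x)) + G / (2 * N) * (u x ^ 2 / x)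
        + c * u x * h1f m x * x = N / (2 * G) * c ^ 2 * h1f m x ^ 2 / x
          + (N * c * h1f m x * x ^ 2 + G * u x) ^ 2 / (2 * G * N * x) := by
      field_simp; ring
    have : 0 ≤ N / (2 * G) * c ^ 2 * h1f m x ^ 2 / x
        + (N * c * h1f m x * x ^ 2 + G * u x) ^ 2 / (2 * G * N * x) := by positivity
    linarith
  have hc : c ^ 2 ≤ G / N ^ 2 * Y := by
    have e3 : N / (2 * G) * c ^ 2 * G = c ^ 2 * N / 2 := by field_simp
    have e4 : G / N ^ 2 * Y = G / (2 * N) * Y * (2 / N) := by field_simp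
    rw [e3] at hcN
    rw [e4, mul_div_assoc', le_div_iff₀ hN0]
    linarith
  have hH : ∫ x in Ioi 0, h1f m x ^ 2 / x ≤ G := by
    refine setIntegral_mono_on hdiv (integrableOn_h1f_weight hm) measurableSet_Ioi
      fun r (hr : 0 < r) => ?_
    rw [mul_add, mul_one_div]
    linarith [show 0 ≤ h1f m r ^ 2 * r ^ 3 by positivity]
  have hfin : ∫ x in Ioi 0, z x ^ 2 / x ≤ 2 * Y + 2 * c ^ 2 * ∫ x in Ioi 0, h1f m x ^ 2 / x := by
    rw [← integral_const_mul, ← integral_const_mul,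
      ← integral_add (hiu.const_mul 2) (hdiv.const_mul (2 * c ^ 2))]
    refine setIntegral_mono_on hiz ((hiu.const_mul 2).add (hdiv.const_mul (2 * c ^ 2)))
      measurableSet_Ioi fun r (hr : 0 < r) => ?_
    rw [← mul_div_assoc, ← mul_div_assoc, ← add_div]
    gcongr
    simp only [hudef]
    nlinarith [sq_nonneg (z r - 2 * c * h1f m r)]
  have hY0 : 0 ≤ Y := setIntegral_nonneg measurableSet_Ioi fun x (hx : 0 < x) => by positivity
  have hH0 : 0 ≤ ∫ x in Ioi 0, h1f m x ^ 2 / x :=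
    setIntegral_nonneg measurableSet_Ioi fun x (hx : 0 < x) => by positivity
  calc ∫ x in Ioi 0, z x ^ 2 / x ≤ 2 * Y + 2 * c ^ 2 * ∫ x in Ioi 0, h1f m x ^ 2 / x := hfin
    _ ≤ 2 * Y + 2 * (G / N ^ 2 * Y) * G := by gcongr
    _ = 2 * (1 + G ^ 2 / N ^ 2) * Y := by ring
    _ ≤ 2 * (1 + G ^ 2 / N ^ 2) * (16 * F) := by gcongr
    _ = 32 * (1 + G ^ 2 / N ^ 2) * F := by ring

lemma LocACR.integrableOn_of_le {m : ℕ} (hm : 3 ≤ m) {w dw D : ℝ → ℝ} (hw : LocACR w dw)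
    (hD : IntegrableOn D (Ioi 0)) (hle : ∀ x > 0, (dw x ^ 2 + w x ^ 2 / x ^ 2) * x ≤ D x) :
    IntegrableOn (fun x => w x ^ 2 / x) (Ioi 0) ∧
      IntegrableOn (fun x => (dw x + m / x * h3f m x * w x) ^ 2 * x) (Ioi 0) ∧
      IntegrableOn (fun x => w x * (h1f m x * x)) (Ioi 0) := by
  have hcw := hw.continuousOn
  have hne : ∀ x ∈ Ioi (0 : ℝ), x ≠ 0 := fun x hx => ne_of_gt hx
  have hL : ContinuousOn (fun x => (m : ℝ) / x * h3f m x * w x) (Ioi 0) :=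
    ((continuousOn_const.div continuousOn_id hne).mul (continuousOn_h3f m)).mul hcw
  have hbound : ∀ x > 0, dw x ^ 2 * x + w x ^ 2 / x ≤ D x := fun x hx => by
    convert! hle x hx using 1
    field_simp
  refine ⟨hD.mono' (((hcw.pow 2).div continuousOn_id hne).aestronglyMeasurable
      measurableSet_Ioi) ?_, (hD.const_mul (2 + 2 * (m : ℝ) ^ 2)).mono'
      (((hw.aestronglyMeasurable.add (hL.aestronglyMeasurable measurableSet_Ioi)).pow 2).mul
        aestronglyMeasurable_id) ?_, (hD.add (integrableOn_h1f_weight hm)).mono'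
      ((hcw.mul ((continuousOn_h1f m).mul continuousOn_id)).aestronglyMeasurable
        measurableSet_Ioi) ?_⟩
  all_goals
    filter_upwards [ae_restrict_mem measurableSet_Ioi] with x (hx : 0 < x)
    have hb := hbound x hx
    have hd0 : 0 ≤ dw x ^ 2 * x := by positivity
    have hw0 : 0 ≤ w x ^ 2 / x := by positivity
  · rw [Real.norm_of_nonneg hw0]
    linarith
  · rw [Real.norm_of_nonneg (by positivity)]
    have h3 : (m : ℝ) ^ 2 * (w x ^ 2 / x) * h3f m x ^ 2 ≤ (m : ℝ) ^ 2 * (w x ^ 2 / x) :=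
      mul_le_of_le_one_right (by positivity) (h3f_sq_le_one m hx)
    have e : (dw x + m / x * h3f m x * w x) ^ 2 * x + (dw x - m / x * h3f m x * w x) ^ 2 * x
        = 2 * (dw x ^ 2 * x) + 2 * ((m : ℝ) ^ 2 * (w x ^ 2 / x) * h3f m x ^ 2) := by
      field_simp; ring
    have h4 : 0 ≤ (dw x - m / x * h3f m x * w x) ^ 2 * x := by positivity
    have h5 : (m : ℝ) ^ 2 * (dw x ^ 2 * x + w x ^ 2 / x) ≤ (m : ℝ) ^ 2 * D x := by gcongr
    have h6 : 0 ≤ (m : ℝ) ^ 2 * (dw x ^ 2 * x) := by positivity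
    nlinarith
  · have hh : 0 ≤ h1f m x ^ 2 / x := by positivity
    have hG : h1f m x ^ 2 * (x ^ 3 + 1 / x) = h1f m x ^ 2 * x ^ 3 + h1f m x ^ 2 / x := by ring
    rw [Pi.add_apply, hG, Real.norm_eq_abs, abs_le]
    have e1 : w x ^ 2 / x + h1f m x ^ 2 * x ^ 3 - 2 * (w x * (h1f m x * x)) =
        (w x - h1f m x * x ^ 2) ^ 2 / x := by field_simp; ring
    have e2 : w x ^ 2 / x + h1f m x ^ 2 * x ^ 3 + 2 * (w x * (h1f m x * x)) =
        (w x + h1f m x * x ^ 2) ^ 2 / x := by field_simp; ring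
    have p1 : 0 ≤ (w x - h1f m x * x ^ 2) ^ 2 / x := by positivity
    have p2 : 0 ≤ (w x + h1f m x * x ^ 2) ^ 2 / x := by positivity
    have p3 : 0 ≤ h1f m x ^ 2 * x ^ 3 := by positivity
    constructor <;> linarith

lemma LocACC.re {z dz : ℝ → ℂ} (h : LocACC z dz) :
    LocACR (fun x => (z x).re) (fun x => (dz x).re) := by
  refine ⟨fun a b ha hab => ⟨(h.1 a b ha hab).1.re, (h.1 a b ha hab).2.re⟩, fun a b ha hab => ?_⟩
  rw [← Complex.sub_re, h.2 a b ha hab]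
  exact (Complex.reCLM.intervalIntegral_comp_comm (h.1 a b ha hab)).symm

lemma LocACC.im {z dz : ℝ → ℂ} (h : LocACC z dz) :
    LocACR (fun x => (z x).im) (fun x => (dz x).im) := by
  refine ⟨fun a b ha hab => ⟨(h.1 a b ha hab).1.im, (h.1 a b ha hab).2.im⟩, fun a b ha hab => ?_⟩
  rw [← Complex.sub_im, h.2 a b ha hab]
  exact (Complex.imCLM.intervalIntegral_comp_comm (h.1 a b ha hab)).symm

lemma norm_sq_L0op (m : ℕ) (z dz : ℝ → ℂ) (x : ℝ) : ‖L0op m z dz x‖ ^ 2 =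
    ((dz x).re + m / x * h3f m x * (z x).re) ^ 2 +
      ((dz x).im + m / x * h3f m x * (z x).im) ^ 2 := by
  rw [Complex.sq_norm, Complex.normSq_apply, L0op, Complex.add_re, Complex.add_im,
    Complex.re_ofReal_mul, Complex.im_ofReal_mul]
  ring

/-- **Coercivity of L₀ under orthogonality to h₁ (X-norm version).** For m ≥ 3
there is C = C(m) such that if z has finite X-norm and ∫ z h₁ ρ dρ = 0, then
‖z‖_X ≤ C ‖L₀ z‖_{L²(ρ dρ)}. -/
theorem statement9 (m : ℕ) (hm : 3 ≤ m) :
    ∃ C > (0:ℝ), ∀ z dz : ℝ → ℂ,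
      LocACC z dz →
      IntegrableOn (xDen z dz) (Ioi (0:ℝ)) →
      (∫ ρ in Ioi (0:ℝ), z ρ * ((h1f m ρ * ρ : ℝ) : ℂ)) = 0 →
      normX z dz ≤ C * Real.sqrt (∫ ρ in Ioi (0:ℝ), ‖L0op m z dz ρ‖ ^ 2 * ρ) := by
  obtain ⟨K, hK, hreal⟩ := exists_real_coercivity hm
  refine ⟨√(2 + (2 * m ^ 2 + 1) * K), by positivity, fun z dz hz hX ho => ?_⟩
  have hnz (x : ℝ) : ‖z x‖ ^ 2 = (z x).re ^ 2 + (z x).im ^ 2 := by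
    rw [Complex.sq_norm, Complex.normSq_apply]; ring
  have hndz (x : ℝ) : ‖dz x‖ ^ 2 = (dz x).re ^ 2 + (dz x).im ^ 2 := by
    rw [Complex.sq_norm, Complex.normSq_apply]; ring
  have hre : ∀ x > 0, ((dz x).re ^ 2 + (z x).re ^ 2 / x ^ 2) * x ≤ xDen z dz x := fun x hx => by
    rw [xDen, hnz, hndz]
    gcongr <;> nlinarith [sq_nonneg (z x).im, sq_nonneg (dz x).im]
  have him : ∀ x > 0, ((dz x).im ^ 2 + (z x).im ^ 2 / x ^ 2) * x ≤ xDen z dz x := fun x hx => by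
    rw [xDen, hnz, hndz]
    gcongr <;> nlinarith [sq_nonneg (z x).re, sq_nonneg (dz x).re]
  obtain ⟨hr1, hr2, hr3⟩ := hz.re.integrableOn_of_le hm hX hre
  obtain ⟨hi1, hi2, hi3⟩ := hz.im.integrableOn_of_le hm hX him
  have horth : IntegrableOn (fun x => z x * ((h1f m x * x : ℝ) : ℂ)) (Ioi 0) := by
    refine (hr3.ofReal.add (hi3.ofReal.mul_const Complex.I)).congr ?_
    filter_upwards with x
    apply Complex.ext <;> simp
  have hor : ∫ x in Ioi 0, (z x).re * (h1f m x * x) = 0 := by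
    have := Complex.reCLM.integral_comp_comm horth
    rw [ho, map_zero] at this
    simpa only [Complex.reCLM_apply, Complex.re_mul_ofReal] using this
  have hoi : ∫ x in Ioi 0, (z x).im * (h1f m x * x) = 0 := by
    have := Complex.imCLM.integral_comp_comm horth
    rw [ho, map_zero] at this
    simpa only [Complex.imCLM_apply, Complex.im_mul_ofReal] using this
  have hYr := hreal _ _ hz.re hr1 hr2 hr3 hor
  have hYi := hreal _ _ hz.im hi1 hi2 hi3 hoi
  have hF : ∫ x in Ioi 0, ‖L0op m z dz x‖ ^ 2 * x =
      (∫ x in Ioi 0, ((dz x).re + m / x * h3f m x * (z x).re) ^ 2 * x) +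
        ∫ x in Ioi 0, ((dz x).im + m / x * h3f m x * (z x).im) ^ 2 * x := by
    rw [← integral_add hr2 hi2]
    simp only [norm_sq_L0op, add_mul]
  have hLI : IntegrableOn (fun x => ((dz x).re + m / x * h3f m x * (z x).re) ^ 2 * x +
      ((dz x).im + m / x * h3f m x * (z x).im) ^ 2 * x) (Ioi 0) := hr2.add hi2
  have hzI : IntegrableOn (fun x => (z x).re ^ 2 / x + (z x).im ^ 2 / x) (Ioi 0) := hr1.add hi1
  have hle : ∫ x in Ioi 0, xDen z dz x ≤ ∫ x in Ioi 0,
      (2 * (((dz x).re + m / x * h3f m x * (z x).re) ^ 2 * x +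
        ((dz x).im + m / x * h3f m x * (z x).im) ^ 2 * x) +
          (2 * (m : ℝ) ^ 2 + 1) * ((z x).re ^ 2 / x + (z x).im ^ 2 / x)) := by
    refine setIntegral_mono_on hX ((hLI.const_mul 2).add (hzI.const_mul _))
      measurableSet_Ioi fun x (hx : 0 < x) => ?_
    have aux (s w : ℝ) : (s ^ 2 + w ^ 2 / x ^ 2) * x ≤
        2 * ((s + m / x * h3f m x * w) ^ 2 * x) + (2 * (m : ℝ) ^ 2 + 1) * (w ^ 2 / x) := by
      have e : 2 * ((s + m / x * h3f m x * w) ^ 2 * x) + (2 * (m : ℝ) ^ 2 + 1) * (w ^ 2 / x)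
          - (s ^ 2 + w ^ 2 / x ^ 2) * x = (s + 2 * (m / x * h3f m x * w)) ^ 2 * x
            + 2 * (m : ℝ) ^ 2 * (w ^ 2 / x) * (1 - h3f m x ^ 2) := by
        field_simp; ring
      have h3 : 0 ≤ 1 - h3f m x ^ 2 := sub_nonneg.2 (h3f_sq_le_one m hx)
      have : 0 ≤ (s + 2 * (m / x * h3f m x * w)) ^ 2 * x
            + 2 * (m : ℝ) ^ 2 * (w ^ 2 / x) * (1 - h3f m x ^ 2) := by positivity
      linarith
    have hxd : xDen z dz x = ((dz x).re ^ 2 + (z x).re ^ 2 / x ^ 2) * x +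
        ((dz x).im ^ 2 + (z x).im ^ 2 / x ^ 2) * x := by
      rw [xDen, hnz, hndz]; ring
    linarith [aux (dz x).re (z x).re, aux (dz x).im (z x).im]
  rw [integral_add (hLI.const_mul 2) (hzI.const_mul _), integral_const_mul, integral_const_mul,
    integral_add hr2 hi2, integral_add hr1 hi1] at hle
  rw [normX, ← Real.sqrt_mul (by positivity)]
  refine Real.sqrt_le_sqrt (hle.trans ?_)
  rw [hF]
  have := mul_le_mul_of_nonneg_left (add_le_add hYr hYi)
    (show (0 : ℝ) ≤ 2 * (m : ℝ) ^ 2 + 1 by positivity)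
  linarith

end
end

section
/- Let V ∈ C^∞((0,∞)) satisfy 0 ≤ r²V(r) ≤ c₀ for all r > 0 and the repulsivity condition 1 − r²(rV(r))' ≥ ν for some ν > 0. Then there is a constant C depending only on ν and c₀ such that the following a priori weighted resolvent estimate holds uniformly in μ ∈ ℂ with Im μ ≠ 0: if v ∈ H²(ℝ²) has the form v(x) = e^{iθ}w(r) in polar coordinates (so that automatically v/|x| ∈ L²(ℝ²)), and f := (−Δ + V − μ)v satisfies |x| f ∈ L²(ℝ²), then ‖v/|x|‖_{L²(ℝ²)} ≤ C ‖ |x| f ‖_{L²(ℝ²)}. Equivalently, for the Schrödinger operator H = −Δ + 1/r² + V acting on radial functions u(r) = e^{−iθ}v, one has the uniform bound ‖(1/|x|)(H−μ)^{−1} g‖_{L²} ≤ C ‖|x| g‖_{L²} for radial g. -/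
open MeasureTheory Set Real Filter
open scoped ENNReal

noncomputable section

/-- If `A r / r` is integrable near infinity, then `A` takes arbitrarily small values near
infinity. -/
lemma exists_gt_lt_of_integrableOn_div {A : ℝ → ℝ}
    (hA : IntegrableOn (fun r => A r / r) (Ioi (0 : ℝ))) {T η : ℝ} (hT : 0 < T) (hη : 0 < η) :
    ∃ t > T, A t < η := by
  by_contra! h
  refine not_integrableOn_Ioi_inv (a := T) ?_
  refine ((hA.mono_set (Ioi_subset_Ioi hT.le)).const_mul η⁻¹).mono'
    measurable_inv.aestronglyMeasurable ?_
  filter_upwards [ae_restrict_mem measurableSet_Ioi] with t ht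
  have ht0 : 0 < t := hT.trans ht
  rw [Real.norm_of_nonneg (inv_nonneg.2 ht0.le), inv_mul_eq_div, le_div_iff₀ hη, inv_mul_eq_div]
  gcongr
  exact h t ht

/-- If `B r / r` is integrable near zero, then `B` takes arbitrarily small values near zero. -/
lemma exists_lt_lt_of_integrableOn_div {B : ℝ → ℝ}
    (hB : IntegrableOn (fun r => B r / r) (Ioi (0 : ℝ))) {δ η : ℝ} (hδ : 0 < δ) (hη : 0 < η) :
    ∃ s, 0 < s ∧ s ≤ δ ∧ B s < η := by
  by_contra! h
  have hint : IntervalIntegrable (fun x : ℝ => x⁻¹) volume 0 δ := by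
    rw [intervalIntegrable_iff_integrableOn_Ioc_of_le hδ.le]
    refine ((hB.mono_set Ioc_subset_Ioi_self).const_mul η⁻¹).mono'
      measurable_inv.aestronglyMeasurable ?_
    filter_upwards [ae_restrict_mem measurableSet_Ioc] with t ht
    have ht0 : 0 < t := ht.1
    rw [Real.norm_of_nonneg (inv_nonneg.2 ht0.le), inv_mul_eq_div, le_div_iff₀ hη, inv_mul_eq_div]
    gcongr
    exact h t ht.1 ht.2
  rcases intervalIntegrable_inv_iff.1 hint with h0 | h0
  · exact hδ.ne h0
  · exact h0 left_mem_uIcc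

/-- An integrable function dominated by the derivative of `P` has nonpositive integral over the
half-line when `P` is bounded above, resp. below, by functions which are small along sequences
tending to infinity, resp. zero. -/
lemma setIntegral_Ioi_nonpos_of_le_deriv {F P P' A B : ℝ → ℝ}
    (hF : IntegrableOn F (Ioi (0 : ℝ)))
    (hP : ∀ r ∈ Ioi (0 : ℝ), HasDerivAt P (P' r) r)
    (hFP : ∀ r ∈ Ioi (0 : ℝ), F r ≤ P' r)
    (hA : IntegrableOn (fun r => A r / r) (Ioi (0 : ℝ)))
    (hB : IntegrableOn (fun r => B r / r) (Ioi (0 : ℝ)))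
    (hPA : ∀ r ∈ Ioi (0 : ℝ), P r ≤ A r) (hPB : ∀ r ∈ Ioi (0 : ℝ), -B r ≤ P r) :
    ∫ r in Ioi (0 : ℝ), F r ≤ 0 := by
  have hpos : ∀ n : ℕ, (0 : ℝ) < n + 1 := fun n => by positivity
  choose t ht hAt using fun n : ℕ =>
    exists_gt_lt_of_integrableOn_div hA (hpos n) (one_div_pos.2 (hpos n))
  choose s hs0 hs hBs using fun n : ℕ =>
    exists_lt_lt_of_integrableOn_div hB (one_div_pos.2 (hpos n)) (one_div_pos.2 (hpos n))
  have hs_lim : Tendsto s atTop (nhds 0) :=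
    squeeze_zero (fun n => (hs0 n).le) hs tendsto_one_div_add_atTop_nhds_zero_nat
  have ht_lim : Tendsto t atTop atTop :=
    tendsto_atTop_mono (fun n => by linarith [ht n] : ∀ n : ℕ, (n : ℝ) ≤ t n)
      tendsto_natCast_atTop_atTop
  have hcover : AECover (volume.restrict (Ioi (0 : ℝ))) atTop fun n => Ioc (s n) (t n) :=
    (aecover_Ioi_of_Ioi hs_lim).inter (aecover_Iic ht_lim)
  have hlim := hcover.integral_tendsto_of_countably_generated hF
  have hzero : Tendsto (fun n : ℕ => 2 * (1 / ((n : ℝ) + 1))) atTop (nhds 0) := by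
    simpa using (tendsto_one_div_add_atTop_nhds_zero_nat (𝕜 := ℝ)).const_mul 2
  refine le_of_tendsto_of_tendsto' hlim hzero fun n => ?_
  have hst : s n ≤ t n := by
    have h1 : 1 / ((n : ℝ) + 1) ≤ 1 := by
      rw [div_le_one (hpos n)]
      linarith [n.cast_nonneg (α := ℝ)]
    linarith [hs n, ht n, n.cast_nonneg (α := ℝ)]
  have hsub : Icc (s n) (t n) ⊆ Ioi 0 := fun x hx => (hs0 n).trans_le hx.1
  have hle := intervalIntegral.integral_le_sub_of_hasDeriv_right_of_le hst
    (fun x hx => (hP x (hsub hx)).continuousAt.continuousWithinAt)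
    (fun x hx => (hP x (hsub (Ioo_subset_Icc_self hx))).hasDerivWithinAt)
    (hF.mono_set hsub) (fun x hx => hFP x (hsub (Ioo_subset_Icc_self hx)))
  rw [intervalIntegral.integral_of_le hst] at hle
  rw [Measure.restrict_restrict measurableSet_Ioc,
    inter_eq_left.2 (Ioc_subset_Icc_self.trans hsub)]
  have h1 := hPA (t n) (hsub ⟨hst, le_rfl⟩)
  have h2 := hPB (s n) (hs0 n)
  linarith [hAt n, hBs n]

/-- Pointwise lower bound for the derivative of the virial functional
`|G|² - (r² V + 5/4 - ν/2) |w|²`, with `G = r w' + w/2 - i κ r w`. -/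
lemma virial_deriv_lower_bound {r V d ν : ℝ} {κ G w f : ℂ} (hr : 0 < r) (hκ : 0 ≤ κ.im)
    (hV : 0 ≤ r ^ 2 * V) (hd : r ^ 2 * d ≤ 1 - ν) (hν : 0 < ν) (hν1 : ν ≤ 1) :
    3 * ν / 4 * (‖w‖ ^ 2 / r ^ 2 * r) - ν⁻¹ * (r ^ 2 * ‖f‖ ^ 2 * r) ≤
      2 * inner ℝ G (-(Complex.I * κ * G) + G / (2 * r) + 3 / 4 * w / r + r * V * w - r * f)
        - ((1 * (r * V) + r * d) * ‖w‖ ^ 2 + (r * (r * V) + 5 / 4 - ν / 2) *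
          (2 * inner ℝ w (Complex.I * κ * w + G / r - w / (2 * r)))) := by
  have key : 2 * inner ℝ G
        (-(Complex.I * κ * G) + G / (2 * r) + 3 / 4 * w / r + r * V * w - r * f)
        - ((1 * (r * V) + r * d) * ‖w‖ ^ 2 + (r * (r * V) + 5 / 4 - ν / 2) *
          (2 * inner ℝ w (Complex.I * κ * w + G / r - w / (2 * r))))
      - (3 * ν / 4 * (‖w‖ ^ 2 / r ^ 2 * r) - ν⁻¹ * (r ^ 2 * ‖f‖ ^ 2 * r))
      = 2 * κ.im * ‖G‖ ^ 2 + 2 * κ.im * (r ^ 2 * V + 5 / 4 - ν / 2) * ‖w‖ ^ 2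
        + (1 - ν) / r * ‖G - w / 2‖ ^ 2 + (1 - ν - r ^ 2 * d) / r * ‖w‖ ^ 2
        + (ν * r)⁻¹ * ‖ν * G - r ^ 2 * f‖ ^ 2 := by
    have e1 : G / (2 * r : ℂ) = ((1 / (2 * r) : ℝ) : ℂ) * G := by push_cast; ring
    have e2 : 3 / 4 * w / (r : ℂ) = ((3 / (4 * r) : ℝ) : ℂ) * w := by push_cast; ring
    have e3 : G / (r : ℂ) = ((1 / r : ℝ) : ℂ) * G := by push_cast; ring
    have e4 : w / (2 * r : ℂ) = ((1 / (2 * r) : ℝ) : ℂ) * w := by push_cast; ring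
    have e5 : w / 2 = ((1 / 2 : ℝ) : ℂ) * w := by push_cast; ring
    have e6 : (r : ℂ) * V * w = ((r * V : ℝ) : ℂ) * w := by push_cast; ring
    have e7 : (r : ℂ) ^ 2 * f = ((r ^ 2 : ℝ) : ℂ) * f := by push_cast; ring
    rw [e1, e2, e3, e4, e5, e6, e7]
    simp only [Complex.inner, Complex.sq_norm, Complex.normSq_apply, Complex.mul_re,
      Complex.mul_im, Complex.add_re, Complex.add_im, Complex.sub_re, Complex.sub_im,
      Complex.neg_re, Complex.neg_im, Complex.conj_re, Complex.conj_im, Complex.ofReal_re,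
      Complex.ofReal_im, Complex.I_re, Complex.I_im]
    field_simp
    ring
  have hc : 0 ≤ r ^ 2 * V + 5 / 4 - ν / 2 := by linarith
  have h1 : 0 ≤ 1 - ν := by linarith
  have h2 : 0 ≤ 1 - ν - r ^ 2 * d := by linarith
  rw [← sub_nonneg, key]
  positivity

/-- Every complex number has a square root in the closed upper half-plane. -/
lemma exists_sq_eq_im_nonneg (μ : ℂ) : ∃ κ : ℂ, κ ^ 2 = μ ∧ 0 ≤ κ.im := by
  obtain ⟨z, hz⟩ := IsAlgClosed.exists_pow_nat_eq μ (n := 2) two_pos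
  rcases le_total 0 z.im with h | h
  · exact ⟨z, hz, h⟩
  · exact ⟨-z, by rw [neg_sq, hz], by simpa using h⟩

/-- **Uniform weighted resolvent estimate in two dimensions for critical-decay
repulsive potentials.** Let V ∈ C^∞(0,∞) with 0 ≤ r²V(r) ≤ c₀ and
1 − r²(rV(r))′ ≥ ν > 0. There is C = C(ν,c₀) such that, uniformly in μ ∈ ℂ with
Im μ ≠ 0: if v ∈ H²(ℝ²) has the form v(x) = e^{iθ}w(r), and
f := (−Δ + V − μ)v (i.e. f = −w″ − w′/r + w/r² + (V−μ)w) satisfies |x|f ∈ L²,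
then ‖v/|x|‖_{L²(ℝ²)} ≤ C ‖|x|f‖_{L²(ℝ²)}. -/
theorem statement14 (c₀ ν : ℝ) (hc₀ : 0 < c₀) (hν : 0 < ν) :
    ∃ C > (0:ℝ), ∀ V : ℝ → ℝ,
      -- V ∈ C^∞(0,∞)
      ContDiffOn ℝ (⊤ : ℕ∞) V (Ioi (0:ℝ)) →
      -- 0 ≤ r² V(r) ≤ c₀
      (∀ r ∈ Ioi (0:ℝ), 0 ≤ r ^ 2 * V r ∧ r ^ 2 * V r ≤ c₀) →
      -- repulsivity: 1 − r² (r V(r))' ≥ ν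
      (∀ r ∈ Ioi (0:ℝ), ν ≤ 1 - r ^ 2 * deriv (fun ρ => ρ * V ρ) r) →
      ∀ (μ : ℂ), μ.im ≠ 0 →
      ∀ (w dw ddw : ℝ → ℂ),
      -- radial profile w of v(x) = e^{iθ} w(r), twice differentiable on (0,∞)
      (∀ r ∈ Ioi (0:ℝ), HasDerivAt w (dw r) r) →
      (∀ r ∈ Ioi (0:ℝ), HasDerivAt dw (ddw r) r) →
      -- v ∈ H²(ℝ²): v ∈ L², ∇v ∈ L² (in particular v/|x| ∈ L²), D²v ∈ L²
      IntegrableOn (fun r => ‖w r‖ ^ 2 * r) (Ioi (0:ℝ)) →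
      IntegrableOn (fun r => (‖dw r‖ ^ 2 + ‖w r‖ ^ 2 / r ^ 2) * r) (Ioi (0:ℝ)) →
      IntegrableOn (fun r => ‖ddw r + dw r / (r:ℂ) - w r / (r:ℂ) ^ 2‖ ^ 2 * r)
        (Ioi (0:ℝ)) →
      ∀ f : ℝ → ℂ,
      -- f = (−Δ + V − μ) v, written radially
      (∀ r ∈ Ioi (0:ℝ),
        f r = -(ddw r) - dw r / (r:ℂ) + w r / (r:ℂ) ^ 2 + (((V r : ℝ) : ℂ) - μ) * w r) →
      -- |x| f ∈ L²
      IntegrableOn (fun r => r ^ 2 * ‖f r‖ ^ 2 * r) (Ioi (0:ℝ)) →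
      Real.sqrt (∫ r in Ioi (0:ℝ), ‖w r‖ ^ 2 / r ^ 2 * r)
        ≤ C * Real.sqrt (∫ r in Ioi (0:ℝ), r ^ 2 * ‖f r‖ ^ 2 * r) := by
  set n := min ν 1 with hn
  have hn0 : 0 < n := lt_min hν one_pos
  have hn1 : n ≤ 1 := min_le_right _ _
  have hnν : n ≤ ν := min_le_left _ _
  refine ⟨2 / n, by positivity, ?_⟩
  intro V hVs hV hrep μ _ w dw ddw hw hdw hL2 hH1 _ f hf hfL2
  obtain ⟨κ, hκ, hκim⟩ := exists_sq_eq_im_nonneg μ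
  have hwc : ContinuousOn w (Ioi 0) := fun r hr => (hw r hr).continuousAt.continuousWithinAt
  have hdwc : ContinuousOn dw (Ioi 0) := fun r hr => (hdw r hr).continuousAt.continuousWithinAt
  have hX : IntegrableOn (fun r => ‖w r‖ ^ 2 / r ^ 2 * r) (Ioi (0 : ℝ)) := by
    refine hH1.mono' (ContinuousOn.aestronglyMeasurable ?_ measurableSet_Ioi) ?_
    · exact ((hwc.norm.pow 2).div (continuousOn_id.pow 2)
        fun r hr => pow_ne_zero 2 (ne_of_gt hr)).mul continuousOn_id
    · filter_upwards [ae_restrict_mem measurableSet_Ioi] with r hr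
      have hr0 : 0 < r := hr
      rw [Real.norm_of_nonneg (by positivity)]
      gcongr
      linarith [sq_nonneg ‖dw r‖]
  set G : ℝ → ℂ := fun r => r * dw r + w r / 2 - Complex.I * κ * (r * w r) with hG
  have hA : IntegrableOn (fun r => ‖G r‖ ^ 2 / r) (Ioi (0 : ℝ)) := by
    have hofReal : ContinuousOn (fun r : ℝ => (r : ℂ)) (Ioi 0) :=
      Complex.continuous_ofReal.continuousOn
    have hGc : ContinuousOn G (Ioi 0) :=
      ((hofReal.mul hdwc).add (hwc.div_const 2)).sub
        (continuousOn_const.mul (hofReal.mul hwc))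
    refine ((hH1.const_mul 3).add (hL2.const_mul (3 * ‖κ‖ ^ 2))).mono'
      (ContinuousOn.aestronglyMeasurable ?_ measurableSet_Ioi) ?_
    · exact (hGc.norm.pow 2).div continuousOn_id fun r hr => ne_of_gt hr
    · filter_upwards [ae_restrict_mem measurableSet_Ioi] with r hr
      have hr0 : 0 < r := hr
      have hle : ‖G r‖ ≤ r * ‖dw r‖ + ‖w r‖ / 2 + ‖κ‖ * (r * ‖w r‖) := by
        refine (norm_sub_le _ _).trans (add_le_add ((norm_add_le _ _).trans ?_) ?_) <;>
        simp [abs_of_pos hr0]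
      have hsq : ‖G r‖ ^ 2 ≤
          3 * ((r * ‖dw r‖) ^ 2 + ‖w r‖ ^ 2) + 3 * ‖κ‖ ^ 2 * (r * ‖w r‖) ^ 2 := by
        refine (pow_le_pow_left₀ (norm_nonneg _) hle 2).trans ?_
        nlinarith [sq_nonneg (r * ‖dw r‖ - ‖w r‖ / 2),
          sq_nonneg (r * ‖dw r‖ - ‖κ‖ * (r * ‖w r‖)),
          sq_nonneg (‖w r‖ / 2 - ‖κ‖ * (r * ‖w r‖)), sq_nonneg ‖w r‖]
      rw [Real.norm_of_nonneg (by positivity), div_le_iff₀ hr0]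
      refine hsq.trans (le_of_eq ?_)
      simp only [Pi.add_apply]
      field_simp
  have hB : IntegrableOn (fun r => (c₀ + 5 / 4) * ‖w r‖ ^ 2 / r) (Ioi (0 : ℝ)) := by
    refine IntegrableOn.congr_fun (hX.const_mul (c₀ + 5 / 4)) (fun r hr => ?_) measurableSet_Ioi
    have hr0 : r ≠ 0 := ne_of_gt hr
    field_simp
  have hG' : ∀ r ∈ Ioi (0 : ℝ), HasDerivAt G (-(Complex.I * κ * G r) + G r / (2 * r)
      + 3 / 4 * w r / r + r * V r * w r - r * f r) r := by
    intro r hr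
    have hr0 : (r : ℂ) ≠ 0 := Complex.ofReal_ne_zero.2 (ne_of_gt hr)
    have hid : HasDerivAt (fun r : ℝ => (r : ℂ)) 1 r := Complex.ofRealCLM.hasDerivAt
    refine (((hid.mul (hdw r hr)).add ((hw r hr).div_const 2)).sub
      ((hid.mul (hw r hr)).const_mul (Complex.I * κ))).congr_deriv ?_
    rw [hf r hr, ← hκ]
    simp only [hG]
    field_simp
    ring_nf
    simp only [Complex.I_sq]
    ring
  have hdw_eq : ∀ r ∈ Ioi (0 : ℝ), dw r =
      Complex.I * κ * w r + G r / r - w r / (2 * r) := by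
    intro r hr
    have hr0 : (r : ℂ) ≠ 0 := Complex.ofReal_ne_zero.2 (ne_of_gt hr)
    simp only [hG]
    field_simp
    ring
  have hrV : ∀ r ∈ Ioi (0 : ℝ),
      HasDerivAt (fun ρ => ρ * V ρ) (deriv (fun ρ => ρ * V ρ) r) r := by
    intro r hr
    have hVd : DifferentiableAt ℝ V r :=
      ((hVs r hr).contDiffAt (Ioi_mem_nhds hr)).differentiableAt (by simp)
    exact (differentiableAt_id.mul hVd).hasDerivAt
  have hF : IntegrableOn (fun r => 3 * n / 4 * (‖w r‖ ^ 2 / r ^ 2 * r)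
      - n⁻¹ * (r ^ 2 * ‖f r‖ ^ 2 * r)) (Ioi (0 : ℝ)) :=
    (hX.const_mul _).sub (hfL2.const_mul _)
  have hmain := setIntegral_Ioi_nonpos_of_le_deriv
    (P := fun r => ‖G r‖ ^ 2 - (r * (r * V r) + 5 / 4 - n / 2) * ‖w r‖ ^ 2) hF
    (fun r hr => ((hG' r hr).norm_sq.sub (((((hasDerivAt_id r).mul (hrV r hr)).add_const
      (5 / 4)).sub_const (n / 2)).mul (hw r hr).norm_sq)))
    (fun r hr => ?_) hA hB (fun r hr => ?_) (fun r hr => ?_)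
  · rw [integral_sub (hX.const_mul _) (hfL2.const_mul _), integral_const_mul,
      integral_const_mul, sub_nonpos, inv_mul_eq_div, le_div_iff₀ hn0] at hmain
    have hX0 : 0 ≤ ∫ r in Ioi (0 : ℝ), ‖w r‖ ^ 2 / r ^ 2 * r :=
      setIntegral_nonneg measurableSet_Ioi fun r (hr : 0 < r) => by positivity
    rw [← Real.sqrt_sq (by positivity : (0 : ℝ) ≤ 2 / n), ← Real.sqrt_mul (by positivity)]
    refine Real.sqrt_le_sqrt ?_
    rw [div_pow, div_mul_eq_mul_div, le_div_iff₀ (by positivity)]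
    nlinarith [mul_nonneg hX0 (sq_nonneg n)]
  · have := virial_deriv_lower_bound (f := f r) (G := G r) (w := w r) hr hκim (hV r hr).1
      (by linarith [hrep r hr] : r ^ 2 * deriv (fun ρ => ρ * V ρ) r ≤ 1 - n) hn0 hn1
    rw [← hdw_eq r hr] at this
    exact this
  · have := (hV r hr).1
    have : 0 ≤ (r * (r * V r) + 5 / 4 - n / 2) * ‖w r‖ ^ 2 :=
      mul_nonneg (by linarith) (sq_nonneg _)
    linarith
  · have := (hV r hr).2
    have : (r * (r * V r) + 5 / 4 - n / 2) * ‖w r‖ ^ 2 ≤ (c₀ + 5 / 4) * ‖w r‖ ^ 2 :=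
      mul_le_mul_of_nonneg_right (by linarith) (sq_nonneg _)
    linarith [sq_nonneg ‖G r‖]

end
end
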